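/- arXiv:2405.02570 — 2 statements merged into one kernel-verified Lean document; each statement's English description precedes it below -/
import Mathlib

section
/- For every d ≥ 1, t > 0, s > 0 and multi-indices α, γ ∈ ℕ^d: ∫_{ℝ^d} ∫_{ℝ^d} (H_α^{(t)}(w) + ⟨∇H_α^{(t)}(w), z⟩) · (H_γ^{(t)}(w) + ⟨∇H_γ^{(t)}(w), z⟩) dν_s(z) dν_t(w) equals 1 + |α|·s/t if α = γ, and equals 0 if α ≠ γ. -/
open MeasureTheory ProbabilityTheory

/-- The centered Gaussian product measure `ν_t` on `Fin d → ℝ` with variance `t` per coordinate. -/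
noncomputable def gaussPi (d : ℕ) (t : ℝ) : Measure (Fin d → ℝ) :=
  Measure.pi fun _ => gaussianReal 0 t.toNNReal

/-- Normalized generalized Hermite polynomial `H_n^{(t)}(y) = H_n(y/√t)/√(n!)`,
where `H_n` is the probabilists' Hermite polynomial. -/
noncomputable def Hgen (t : ℝ) (n : ℕ) (y : ℝ) : ℝ :=
  Polynomial.aeval (y / Real.sqrt t) (Polynomial.hermite n) / Real.sqrt (Nat.factorial n)

/-- Tensorized Hermite polynomial `H_α^{(t)}(y) = ∏_j H_{α_j}^{(t)}(y_j)`. -/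
noncomputable def HgenMulti (d : ℕ) (t : ℝ) (α : Fin d → ℕ) (y : Fin d → ℝ) : ℝ :=
  ∏ j, Hgen t (α j) (y j)

/-- Partial derivative of `f : ℝ^d → ℝ` in the `j`-th coordinate at `y`. -/
noncomputable def pd (d : ℕ) (f : (Fin d → ℝ) → ℝ) (j : Fin d) (y : Fin d → ℝ) : ℝ :=
  deriv (fun s => f (Function.update y j s)) (y j)

open Polynomial in
lemma hermite_deriv (n : ℕ) :
    derivative (hermite (n+1)) = ((n+1 : ℕ) : ℤ[X]) * hermite n := by
  induction n with
  | zero => simp [hermite_succ]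
  | succ n ih =>
    rw [hermite_succ (n+1), derivative_sub, derivative_mul, ih]
    simp only [derivative_X, derivative_mul, derivative_natCast]
    rw [hermite_succ n]
    push_cast
    ring

open Polynomial in
lemma gauss_poly_integrable (p : ℤ[X]) (v : NNReal) :
    Integrable (fun x : ℝ => aeval x p) (gaussianReal 0 v) := by
  induction p using Polynomial.induction_on' with
  | add p q hp hq => simp only [map_add]; exact hp.add hq
  | monomial n a =>
    have h := (memLp_id_gaussianReal (μ := 0) (v := v) (n : NNReal)).integrable_norm_pow'
    have h2 : Integrable (fun x : ℝ => x ^ n) (gaussianReal 0 v) := by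
      refine h.mono' (by fun_prop) ?_
      filter_upwards with x
      simp
    simpa [aeval_monomial] using h2.const_mul (a : ℝ)

open Polynomial in
lemma gauss_stein (p : ℤ[X]) :
    ∫ x : ℝ, aeval x (X * p - derivative p) ∂(gaussianReal 0 1) = 0 := by
  have hint : ∀ q : ℤ[X], Integrable (fun x : ℝ => gaussianPDFReal 0 1 x * aeval x q) := by
    intro q
    have h := gauss_poly_integrable q 1
    rw [gaussianReal_of_var_ne_zero _ one_ne_zero,
      integrable_withDensity_iff (measurable_gaussianPDF _ _)
        (ae_of_all _ fun _ => gaussianPDF_lt_top)] at h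
    simpa [mul_comm] using h
  rw [integral_gaussianReal_eq_integral_smul one_ne_zero]
  simp only [smul_eq_mul]
  rw [← neg_eq_zero, ← integral_neg]
  refine integral_eq_zero_of_hasDerivAt_of_integrable
    (f := fun x : ℝ => gaussianPDFReal 0 1 x * aeval x p) ?_ (hint _).neg (hint p)
  intro x
  have h1 : HasDerivAt (gaussianPDFReal 0 1) (-x * gaussianPDFReal 0 1 x) x := by
    rw [gaussianPDFReal_def]
    have : HasDerivAt (fun y : ℝ => -(y - 0)^2 / (2 * ((1 : NNReal) : ℝ))) (-x) x := by
      have := (((hasDerivAt_id x).sub_const 0).pow 2).neg.div_const (2 * ((1 : NNReal) : ℝ))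
      refine this.congr_deriv ?_
      simp
      ring
    refine (this.exp.const_mul _).congr_deriv ?_
    ring
  refine (h1.mul (p.hasDerivAt_aeval x)).congr_deriv ?_
  simp
  ring

open Polynomial in
lemma hermite_rec (n : ℕ) (q : ℤ[X]) :
    ∫ x : ℝ, aeval x (hermite (n+1) * q) ∂(gaussianReal 0 1)
      = ∫ x : ℝ, aeval x (hermite n * derivative q) ∂(gaussianReal 0 1) := by
  have h := gauss_stein (hermite n * q)
  have e : X * (hermite n * q) - derivative (hermite n * q)
      = hermite (n+1) * q - hermite n * derivative q := by
    rw [hermite_succ, derivative_mul]; ring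
  rw [e] at h
  simp only [map_sub] at h
  rw [integral_sub (gauss_poly_integrable _ _) (gauss_poly_integrable _ _)] at h
  linarith

open Polynomial in
lemma hermite_orth (m n : ℕ) :
    ∫ x : ℝ, aeval x (hermite m * hermite n) ∂(gaussianReal 0 1)
      = if m = n then (n.factorial : ℝ) else 0 := by
  induction m generalizing n with
  | zero =>
    cases n with
    | zero => simp
    | succ n => rw [mul_comm, hermite_rec]; simp
  | succ m ih =>
    rw [hermite_rec]
    cases n with
    | zero => simp
    | succ n =>
      rw [hermite_deriv]
      have : ∀ x : ℝ, aeval x (hermite m * (((n+1 : ℕ) : ℤ[X]) * hermite n))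
          = ((n+1 : ℕ) : ℝ) * aeval x (hermite m * hermite n) := by
        intro x; simp; ring
      simp only [this]
      rw [integral_const_mul, ih]
      simp [Nat.factorial_succ]

lemma gauss_map (t : ℝ) (ht : 0 < t) :
    (gaussianReal 0 t.toNNReal).map (· / Real.sqrt t) = gaussianReal 0 1 := by
  rw [gaussianReal_map_div_const]
  congr 1
  · simp
  · ext
    simp [Real.sq_sqrt ht.le, ht.le, ht.ne']

lemma Hgen_mul (t : ℝ) (m n : ℕ) (y : ℝ) : Hgen t m y * Hgen t n y
    = (1 / (Real.sqrt m.factorial * Real.sqrt n.factorial)) *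
      Polynomial.aeval (y / Real.sqrt t) (Polynomial.hermite m * Polynomial.hermite n) := by
  simp only [Hgen, map_mul]
  ring

lemma Hgen_integrable (t : ℝ) (ht : 0 < t) (m n : ℕ) :
    Integrable (fun y => Hgen t m y * Hgen t n y) (gaussianReal 0 t.toNNReal) := by
  simp only [Hgen_mul]
  refine Integrable.const_mul ?_ _
  have h := gauss_poly_integrable (Polynomial.hermite m * Polynomial.hermite n) 1
  rw [← gauss_map t ht] at h
  exact h.comp_measurable (by fun_prop)

lemma Hgen_orth (t : ℝ) (ht : 0 < t) (m n : ℕ) :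
    ∫ y, Hgen t m y * Hgen t n y ∂(gaussianReal 0 t.toNNReal) = if m = n then 1 else 0 := by
  simp only [Hgen_mul]
  rw [integral_const_mul]
  have h := hermite_orth m n
  rw [← gauss_map t ht, integral_map (by fun_prop)
    (Polynomial.continuous_aeval _).aestronglyMeasurable] at h
  rw [h]
  split_ifs with hmn
  · subst hmn
    rw [Real.mul_self_sqrt (by positivity)]
    field_simp
  · simp

lemma HgenMulti_integrable (d : ℕ) (t : ℝ) (ht : 0 < t) (α γ : Fin d → ℕ) :
    Integrable (fun y => HgenMulti d t α y * HgenMulti d t γ y) (gaussPi d t) := by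
  simp only [HgenMulti, ← Finset.prod_mul_distrib]
  exact Integrable.fintype_prod (f := fun j y => Hgen t (α j) y * Hgen t (γ j) y)
    fun j => Hgen_integrable t ht _ _

lemma HgenMulti_orth (d : ℕ) (t : ℝ) (ht : 0 < t) (α γ : Fin d → ℕ) :
    ∫ y, HgenMulti d t α y * HgenMulti d t γ y ∂(gaussPi d t) = if α = γ then 1 else 0 := by
  simp only [HgenMulti, ← Finset.prod_mul_distrib, gaussPi]
  rw [integral_fintype_prod_eq_prod (fun j y => Hgen t (α j) y * Hgen t (γ j) y)]
  simp only [Hgen_orth t ht]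
  split_ifs with h
  · simp [h]
  · obtain ⟨j, hj⟩ := Function.ne_iff.mp h
    exact Finset.prod_eq_zero (Finset.mem_univ j) (by simp [hj])

lemma Hgen_deriv (t : ℝ) (n : ℕ) (y : ℝ) :
    deriv (Hgen t n) y = Real.sqrt n / Real.sqrt t * Hgen t (n-1) y := by
  have h : HasDerivAt (Hgen t n) (Polynomial.aeval (y / Real.sqrt t)
      (Polynomial.derivative (Polynomial.hermite n)) * (1 / Real.sqrt t)
        / Real.sqrt n.factorial) y :=
    (((Polynomial.hermite n).hasDerivAt_aeval (y / Real.sqrt t)).comp y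
      ((hasDerivAt_id y).div_const _)).div_const _
  rw [h.deriv]
  cases n with
  | zero => simp
  | succ n =>
    rw [hermite_deriv, Nat.factorial_succ]
    simp only [Hgen, Nat.add_sub_cancel, map_mul, map_natCast, Nat.cast_mul]
    rw [Real.sqrt_mul (by positivity)]
    have h1 : Real.sqrt ((n+1 : ℕ) : ℝ) ≠ 0 := by positivity
    have h2 : ((n+1 : ℕ) : ℝ) = Real.sqrt ((n+1 : ℕ) : ℝ) * Real.sqrt ((n+1 : ℕ) : ℝ) :=
      (Real.mul_self_sqrt (by positivity)).symm
    generalize Real.sqrt ((n+1 : ℕ) : ℝ) = r at *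
    rw [h2]
    field_simp

lemma pd_eq (d : ℕ) (t : ℝ) (α : Fin d → ℕ) (j : Fin d) (w : Fin d → ℝ) :
    pd d (HgenMulti d t α) j w = Real.sqrt (α j) / Real.sqrt t *
      HgenMulti d t (Function.update α j (α j - 1)) w := by
  have e : (fun s => HgenMulti d t α (Function.update w j s))
      = fun s => Hgen t (α j) s * ∏ i ∈ Finset.univ.erase j, Hgen t (α i) (w i) := by
    ext s
    rw [HgenMulti, ← Finset.mul_prod_erase _ _ (Finset.mem_univ j)]
    simp only [Function.update_self]
    congr 1
    refine Finset.prod_congr rfl fun i hi => ?_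
    rw [Function.update_of_ne (Finset.ne_of_mem_erase hi)]
  rw [pd, e, deriv_mul_const_field, Hgen_deriv, HgenMulti,
    ← Finset.mul_prod_erase _ _ (Finset.mem_univ j)]
  simp only [Function.update_self]
  rw [mul_assoc]
  congr 2
  refine Finset.prod_congr rfl fun i hi => ?_
  rw [Function.update_of_ne (Finset.ne_of_mem_erase hi)]

lemma coord_eq (d : ℕ) (s : ℝ) (hs : 0 < s) (j : Fin d) (z : Fin d → ℝ) :
    z j = Real.sqrt s * HgenMulti d s (Pi.single j 1) z := by
  have hs' : Real.sqrt s ≠ 0 := by positivity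
  rw [HgenMulti, ← Finset.mul_prod_erase _ _ (Finset.mem_univ j), Finset.prod_eq_one]
  · simp [Hgen]; field_simp
  · intro i hi
    simp [Hgen, Pi.single_eq_of_ne (Finset.ne_of_mem_erase hi)]

lemma Hzero (d : ℕ) (s : ℝ) (z : Fin d → ℝ) : HgenMulti d s 0 z = 1 := by
  simp [HgenMulti, Hgen]

lemma inner_eq (d : ℕ) (s : ℝ) (hs : 0 < s) (a c : ℝ) (b e : Fin d → ℝ) :
    ∫ z, (a + ∑ j, b j * z j) * (c + ∑ j, e j * z j) ∂(gaussPi d s)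
      = a * c + s * ∑ j, b j * e j := by
  have key : ∀ (b : Option (Fin d) → ℝ) (z : Fin d → ℝ),
      b none + ∑ j, b (some j) * z j
        = ∑ o : Option (Fin d), (b o * o.elim 1 (fun _ => Real.sqrt s)) *
            HgenMulti d s (o.elim 0 (fun j => Pi.single j 1)) z := by
    intro b z
    rw [Fintype.sum_option]
    simp only [Option.elim, Hzero, mul_one]
    congr 1
    refine Finset.sum_congr rfl fun j _ => ?_
    rw [coord_eq d s hs j z]; ring
  have k1 := key (fun o => o.elim a b)
  have k2 := key (fun o => o.elim c e)
  simp only [Option.elim_none, Option.elim_some] at k1 k2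
  simp only [k1, k2, Finset.sum_mul_sum]
  have hI : ∀ (x y : ℝ) (α γ : Fin d → ℕ), Integrable (fun z =>
      (x * HgenMulti d s α z) * (y * HgenMulti d s γ z)) (gaussPi d s) := by
    intro x y α γ
    refine ((HgenMulti_integrable d s hs α γ).const_mul (x * y)).congr ?_
    filter_upwards with z
    ring
  have hV : ∀ (x y : ℝ) (α γ : Fin d → ℕ), ∫ z,
      (x * HgenMulti d s α z) * (y * HgenMulti d s γ z) ∂(gaussPi d s)
        = x * y * if α = γ then 1 else 0 := by
    intro x y α γ
    rw [← HgenMulti_orth d s hs, ← integral_const_mul]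
    congr 1; ext z; ring
  rw [integral_finsetSum _ fun i _ => integrable_finsetSum _ fun j _ => hI _ _ _ _]
  simp only [integral_finsetSum _ fun j _ => hI _ _ _ _, hV]
  have h0 : ∀ j : Fin d, (0 : Fin d → ℕ) ≠ Pi.single j 1 := by
    intro j h; simpa using congrFun h j
  have h1 : ∀ i j : Fin d, (Pi.single i 1 : Fin d → ℕ) = Pi.single j 1 ↔ i = j := by
    intro i j
    refine ⟨fun h => ?_, fun h => by rw [h]⟩
    by_contra hne
    simpa [Pi.single_eq_of_ne hne] using congrFun h i
  simp only [Fintype.sum_option, Option.elim_none, Option.elim_some, h0, (h0 _).symm, h1,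
    if_true, if_false, mul_zero, mul_one, Finset.sum_const_zero, add_zero, zero_add,
    mul_ite, Finset.sum_ite_eq, Finset.mem_univ]
  rw [Finset.mul_sum]
  congr 1
  refine Finset.sum_congr rfl fun j _ => ?_
  have := Real.mul_self_sqrt hs.le
  linear_combination (b j * e j) * this

/-- Expectation of the entries of the gradient-enhanced Gram matrix:
`∫∫ (H_α(w) + ⟨∇H_α(w), z⟩)(H_γ(w) + ⟨∇H_γ(w), z⟩) dν_s(z) dν_t(w)` equals
`1 + |α|·s/t` if `α = γ` and `0` otherwise. -/
theorem gram_entry_expectation (d : ℕ) (hd : 1 ≤ d) (t s : ℝ) (ht : 0 < t) (hs : 0 < s)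
    (α γ : Fin d → ℕ) :
    ∫ w, (∫ z,
        (HgenMulti d t α w + ∑ j, pd d (HgenMulti d t α) j w * z j)
          * (HgenMulti d t γ w + ∑ j, pd d (HgenMulti d t γ) j w * z j)
        ∂(gaussPi d s)) ∂(gaussPi d t)
      = if α = γ then 1 + ((∑ j, α j : ℕ) : ℝ) * s / t else 0 := by
  simp only [inner_eq d s hs, pd_eq]
  have hV : ∀ (x y : ℝ) (β δ : Fin d → ℕ),
      Integrable (fun z => (x * HgenMulti d t β z) * (y * HgenMulti d t δ z)) (gaussPi d t) ∧
      ∫ z, (x * HgenMulti d t β z) * (y * HgenMulti d t δ z) ∂(gaussPi d t)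
        = x * y * if β = δ then 1 else 0 := by
    intro x y β δ
    constructor
    · refine ((HgenMulti_integrable d t ht β δ).const_mul (x * y)).congr ?_
      filter_upwards with z
      ring
    · rw [← HgenMulti_orth d t ht, ← integral_const_mul]
      congr 1; ext z; ring
  rw [integral_add (HgenMulti_integrable d t ht α γ)
    ((integrable_finsetSum _ fun j _ => (hV _ _ _ _).1).const_mul _),
    integral_const_mul, integral_finsetSum _ fun j _ => (hV _ _ _ _).1, HgenMulti_orth d t ht]
  simp only [(hV _ _ _ _).2]
  have ht' := Real.mul_self_sqrt ht.le
  split_ifs with h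
  · subst h
    have : ∀ j, Real.sqrt (α j) / Real.sqrt t * (Real.sqrt (α j) / Real.sqrt t) = α j / t := by
      intro j
      rw [div_mul_div_comm, ht', Real.mul_self_sqrt (by positivity)]
    simp only [this, if_true, mul_one]
    rw [← Finset.sum_div]
    push_cast
    ring
  · rw [Finset.sum_eq_zero, mul_zero, add_zero]
    intro j _
    by_cases ha : α j = 0
    · simp [ha]
    by_cases hg : γ j = 0
    · simp [hg]
    rw [if_neg, mul_zero]
    intro hu
    apply h
    ext i
    have hi := congrFun hu i
    by_cases hij : i = j
    · subst hij
      simp only [Function.update_self] at hi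
      omega
    · simpa [Function.update_of_ne hij] using hi
end

section
/- Let d ≥ 1, t > 0, s > 0. Let u : ℝ^d → ℝ be measurable with ∫∫ u(w+z)²(1 + ‖z‖²) dν_s(z) dν_t(w) < ∞, and let ψ : ℝ^d → ℝ be continuously differentiable such that ψ and ‖∇ψ‖ have at most polynomial growth. Define c(w) := ∫ u(w+z) dν_s(z) and Ž(w) := (1/s) ∫ u(w+z)·z dν_s(z) ∈ ℝ^d. Then ∫_{ℝ^d} ∫_{ℝ^d} (u(w+z) − ψ(w) − ⟨∇ψ(w), z⟩)² dν_s(z) dν_t(w) = ∫ (c(w) − ψ(w))² dν_t(w) + s·∫ ‖Ž(w) − ∇ψ(w)‖² dν_t(w) + R, where R := ∫∫ (u(w+z) − c(w))² dν_s(z) dν_t(w) − s·∫ ‖Ž(w)‖² dν_t(w) does not depend on ψ. -/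
open MeasureTheory ProbabilityTheory

/-- Gaussian smoothing (continuation value) `c(w) = ∫ u(w+z) dν_s(z)`. -/
noncomputable def contVal (d : ℕ) (s : ℝ) (u : (Fin d → ℝ) → ℝ) (w : Fin d → ℝ) : ℝ :=
  ∫ z, u (w + z) ∂(gaussPi d s)

/-- Backward-Euler gradient estimate `Ž(w)_j = (1/s) ∫ u(w+z)·z_j dν_s(z)`. -/
noncomputable def zEst (d : ℕ) (s : ℝ) (u : (Fin d → ℝ) → ℝ) (w : Fin d → ℝ) (j : Fin d) : ℝ :=
  (1 / s) * ∫ z, u (w + z) * z j ∂(gaussPi d s)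

/-- The gradient-enhanced least squares loss
`L(ψ) = ∫∫ (u(w+z) − ψ(w) − ⟨∇ψ(w), z⟩)² dν_s(z) dν_t(w)`. -/
noncomputable def gLoss (d : ℕ) (t s : ℝ) (u ψ : (Fin d → ℝ) → ℝ) : ℝ :=
  ∫ w, (∫ z, (u (w + z) - ψ w - ∑ j, pd d ψ j w * z j) ^ 2 ∂(gaussPi d s)) ∂(gaussPi d t)


instance gaussPi_prob (d : ℕ) (t : ℝ) : IsProbabilityMeasure (gaussPi d t) := by
  unfold gaussPi; infer_instance

lemma gaussPi_memLp_eval (d : ℕ) (t : ℝ) (j : Fin d) (p : ENNReal) (hp : p ≠ ⊤) :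
    MemLp (fun z : Fin d → ℝ => z j) p (gaussPi d t) :=
  (memLp_id_gaussianReal' p hp).comp_measurePreserving
    (measurePreserving_eval (fun _ : Fin d => gaussianReal 0 t.toNNReal) j)

lemma gaussPi_pow (d : ℕ) (t : ℝ) (k : ℕ) :
    Integrable (fun x : Fin d → ℝ => (1 + ‖x‖) ^ k) (gaussPi d t) := by
  have h1 : MemLp (fun x : Fin d → ℝ => x) (k : ENNReal) (gaussPi d t) :=
    MemLp.of_eval (fun j => gaussPi_memLp_eval d t j (k : ENNReal) (ENNReal.natCast_ne_top k))
  have h2 : MemLp (fun x : Fin d → ℝ => 1 + ‖x‖) (k : ENNReal) (gaussPi d t) :=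
    MemLp.add (f := fun _ => (1 : ℝ)) (g := fun x : Fin d → ℝ => ‖x‖) (memLp_const (1 : ℝ)) h1.norm
  refine h2.integrable_norm_pow'.congr (Filter.Eventually.of_forall fun x => ?_)
  have h5 : (0:ℝ) ≤ 1 + ‖x‖ := by positivity
  simp only [Real.norm_of_nonneg h5]

lemma gaussPi_memLp_poly (d : ℕ) (t : ℝ) (f : (Fin d → ℝ) → ℝ) (hf : Measurable f)
    (h : ∃ (C : ℝ) (n : ℕ), ∀ x, |f x| ≤ C * (1 + ‖x‖) ^ n) : MemLp f 2 (gaussPi d t) := by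
  obtain ⟨C, n, h⟩ := h
  have h3 := gaussPi_pow d t (2 * n)
  rw [memLp_two_iff_integrable_sq hf.aestronglyMeasurable]
  refine (h3.const_mul (C ^ 2)).mono' (by fun_prop) (Filter.Eventually.of_forall fun x => ?_)
  rw [Real.norm_of_nonneg (sq_nonneg _), ← sq_abs, pow_mul', ← mul_pow]
  exact pow_le_pow_left₀ (abs_nonneg _) (h x) 2

lemma pd_eq_s11 (d : ℕ) (ψ : (Fin d → ℝ) → ℝ) (hψ : ContDiff ℝ 1 ψ) (j : Fin d) (y : Fin d → ℝ) :
    pd d ψ j y = fderiv ℝ ψ y (Pi.single j 1) := by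
  unfold pd
  have h1 := hasDerivAt_update y j (y j)
  have h2 : HasFDerivAt ψ (fderiv ℝ ψ y) (Function.update y j (y j)) := by
    rw [Function.update_eq_self]
    exact (hψ.differentiable (by norm_num) y).hasFDerivAt
  exact (h2.comp_hasDerivAt (y j) h1).deriv

lemma pd_measurable (d : ℕ) (ψ : (Fin d → ℝ) → ℝ) (hψ : ContDiff ℝ 1 ψ) (j : Fin d) :
    Measurable (pd d ψ j) := by
  have h : pd d ψ j = fun y => fderiv ℝ ψ y (Pi.single j 1) := funext (pd_eq_s11 d ψ hψ j)
  rw [h]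
  exact ((hψ.continuous_fderiv (by norm_num)).clm_apply continuous_const).measurable

lemma gaussPi_lin_memLp (d : ℕ) (s : ℝ) (b : Fin d → ℝ) :
    MemLp (fun z : Fin d → ℝ => ∑ j, b j * z j) 2 (gaussPi d s) :=
  memLp_finsetSum _ fun j _ => (gaussPi_memLp_eval d s j 2 (by simp)).const_mul (b j)

lemma gaussPi_lin_mean (d : ℕ) (s : ℝ) (b : Fin d → ℝ) :
    ∫ z, (∑ j, b j * z j) ∂(gaussPi d s) = 0 := by
  rw [integral_finsetSum]
  · refine Finset.sum_eq_zero fun j _ => ?_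
    rw [integral_const_mul]
    unfold gaussPi
    rw [integral_eval (μ := fun _ : Fin d => gaussianReal 0 s.toNNReal) (i := j),
      integral_id_gaussianReal, mul_zero]
  · intro j _
    exact ((gaussPi_memLp_eval d s j 2 (by simp)).const_mul (b j)).integrable (by norm_num)

lemma gaussPi_lin_sq (d : ℕ) (s : ℝ) (hs : 0 < s) (b : Fin d → ℝ) :
    ∫ z, (∑ j, b j * z j) ^ 2 ∂(gaussPi d s) = s * ∑ j, b j ^ 2 := by
  have h1 := variance_eq_sub (gaussPi_lin_memLp d s b)
  rw [gaussPi_lin_mean] at h1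
  have h2 := variance_sum_pi (μ := fun _ : Fin d => gaussianReal 0 s.toNNReal)
    (X := fun j x => b j * x) (fun j => (memLp_id_gaussianReal' 2 (by simp)).const_mul (b j))
  have h3 : (∑ i, fun ω : Fin d → ℝ => b i * ω i) = fun z => ∑ j, b j * z j := by
    ext z; simp
  rw [h3] at h2
  change variance _ (gaussPi d s) = _ at h2
  have h5 : ∀ i, variance (fun x => b i * x) (gaussianReal 0 s.toNNReal)
      = b i ^ 2 * (s.toNNReal : ℝ) := fun i => by
    rw [variance_const_mul (b i) (fun x => x), variance_fun_id_gaussianReal]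
  rw [Finset.sum_congr rfl fun i _ => h5 i] at h2
  rw [h2] at h1
  rw [Real.coe_toNNReal s hs.le, ← Finset.sum_mul] at h1
  change _ = ∫ z, (∑ j, b j * z j) ^ 2 ∂(gaussPi d s) - _ at h1
  linarith

lemma inner_decomp (d : ℕ) (s : ℝ) (hs : 0 < s) (f : (Fin d → ℝ) → ℝ)
    (hf : MemLp f 2 (gaussPi d s)) (a : ℝ) (b : Fin d → ℝ) (m : ℝ) (ζ : Fin d → ℝ)
    (hm : m = ∫ z, f z ∂(gaussPi d s))
    (hζ : ∀ j, ζ j = (1 / s) * ∫ z, f z * z j ∂(gaussPi d s)) :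
    ∫ z, (f z - a - ∑ j, b j * z j) ^ 2 ∂(gaussPi d s)
      = ∫ z, f z ^ 2 ∂(gaussPi d s) - 2 * a * m - 2 * s * (∑ j, b j * ζ j) + a ^ 2
        + s * ∑ j, b j ^ 2 := by
  have hL := gaussPi_lin_memLp d s b
  have i1 := hf.integrable_sq
  have i2 := hf.integrable (by norm_num)
  have i3 := hL.integrable (by norm_num)
  have i4 := hL.integrable_sq
  have i5 : ∀ j, Integrable (fun z : Fin d → ℝ => f z * z j) (gaussPi d s) := fun j =>
    hf.integrable_mul (gaussPi_memLp_eval d s j 2 (by simp))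
  have i6 : Integrable (fun z : Fin d → ℝ => ∑ j, b j * (f z * z j)) (gaussPi d s) :=
    integrable_finsetSum _ fun j _ => (i5 j).const_mul _
  have e : ∀ z : Fin d → ℝ, (f z - a - ∑ j, b j * z j) ^ 2
      = (f z ^ 2 + (-2 * a) * f z) + (-2) * (∑ j, b j * (f z * z j))
        + (a ^ 2 + 2 * a * (∑ j, b j * z j)) + (∑ j, b j * z j) ^ 2 := by
    intro z
    have : ∑ j, b j * (f z * z j) = f z * ∑ j, b j * z j := by
      rw [Finset.mul_sum]; exact Finset.sum_congr rfl fun j _ => by ring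
    rw [this]; ring
  have e6 : ∫ z, ∑ j, b j * (f z * z j) ∂(gaussPi d s) = s * ∑ j, b j * ζ j := by
    rw [integral_finsetSum _ (fun j _ => (i5 j).const_mul _), Finset.mul_sum]
    refine Finset.sum_congr rfl fun j _ => ?_
    rw [integral_const_mul, hζ j]
    field_simp
  simp_rw [e]
  have c0 : Integrable (fun _ : Fin d → ℝ => a ^ 2) (gaussPi d s) := integrable_const _
  have k1 := i2.const_mul (-2 * a)
  have k2 := i6.const_mul (-2)
  have k3 := i3.const_mul (2 * a)
  have l1 := i1.fun_add k1
  have l2 := l1.fun_add k2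
  have l3 := c0.fun_add k3
  have l4 := l2.fun_add l3
  rw [integral_add l4 i4, integral_add l2 l3, integral_add l1 k2, integral_add i1 k1,
    integral_add c0 k3,
    integral_const_mul, integral_const_mul, integral_const_mul, e6, gaussPi_lin_mean,
    gaussPi_lin_sq d s hs, ← hm]
  simp
  ring

lemma memLp_marginal {α β : Type*} [MeasurableSpace α] [MeasurableSpace β]
    (μ : Measure α) (ν : Measure β) [IsProbabilityMeasure μ] [IsProbabilityMeasure ν]
    (f : α × β → ℝ) (hf : Measurable f) (h : Integrable (fun p => f p ^ 2) (μ.prod ν)) :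
    MemLp (fun w => ∫ z, f (w, z) ∂ν) 2 μ := by
  have hm : StronglyMeasurable (fun w => ∫ z, f (w, z) ∂ν) :=
    hf.stronglyMeasurable.integral_prod_right'
  rw [memLp_two_iff_integrable_sq hm.aestronglyMeasurable]
  refine h.integral_prod_left.mono' (hm.pow 2).aestronglyMeasurable ?_
  filter_upwards [h.prod_right_ae] with w hw
  rw [Real.norm_of_nonneg (sq_nonneg _)]
  have hw2 : MemLp (fun z => f (w, z)) 2 ν :=
    (memLp_two_iff_integrable_sq (hf.comp measurable_prodMk_left).aestronglyMeasurable).2 hw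
  have h1 := variance_eq_sub hw2
  have h2 := variance_nonneg (fun z => f (w, z)) ν
  simp only [Pi.pow_apply] at h1
  linarith

/-- Exact decomposition of the gradient-enhanced least squares loss:
`L(ψ) = ‖c − ψ‖²_{L²(ν_t)} + s·‖Ž − ∇ψ‖²_{L²(ν_t)} + R` where the remainder
`R = ∫∫(u(w+z) − c(w))² dν_s dν_t − s·∫‖Ž‖² dν_t` does not depend on `ψ`. -/
theorem gLoss_decomposition (d : ℕ) (hd : 1 ≤ d) (t s : ℝ) (ht : 0 < t) (hs : 0 < s)
    (u : (Fin d → ℝ) → ℝ) (hu : Measurable u)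
    (hu2 : Integrable
      (fun p : (Fin d → ℝ) × (Fin d → ℝ) => (u (p.1 + p.2)) ^ 2 * (1 + ∑ j, (p.2 j) ^ 2))
      ((gaussPi d t).prod (gaussPi d s)))
    (ψ : (Fin d → ℝ) → ℝ) (hψ : ContDiff ℝ 1 ψ)
    (hψ_growth : ∃ C n, ∀ x, |ψ x| ≤ C * (1 + ‖x‖) ^ n)
    (hgradψ_growth : ∃ C n, ∀ x, Real.sqrt (∑ j, (pd d ψ j x) ^ 2) ≤ C * (1 + ‖x‖) ^ n) :
    gLoss d t s u ψ
      = (∫ w, (contVal d s u w - ψ w) ^ 2 ∂(gaussPi d t))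
        + s * ∫ w, (∑ j, (zEst d s u w j - pd d ψ j w) ^ 2) ∂(gaussPi d t)
        + ((∫ w, (∫ z, (u (w + z) - contVal d s u w) ^ 2 ∂(gaussPi d s)) ∂(gaussPi d t))
            - s * ∫ w, (∑ j, (zEst d s u w j) ^ 2) ∂(gaussPi d t)) := by 
  set μ := gaussPi d t with hμ
  set ν := gaussPi d s with hν
  have mu : Measurable (fun p : (Fin d → ℝ) × (Fin d → ℝ) => u (p.1 + p.2)) := by fun_prop
  have I0 : Integrable (fun p : (Fin d → ℝ) × (Fin d → ℝ) => u (p.1 + p.2) ^ 2) (μ.prod ν) := by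
    refine hu2.mono' (Measurable.aestronglyMeasurable (by fun_prop)) (Filter.Eventually.of_forall fun p => ?_)
    rw [Real.norm_of_nonneg (sq_nonneg _)]
    exact le_mul_of_one_le_right (sq_nonneg _)
      (le_add_of_nonneg_right (Finset.sum_nonneg fun j _ => sq_nonneg _))
  have Ij : ∀ j, Integrable (fun p : (Fin d → ℝ) × (Fin d → ℝ) =>
      (u (p.1 + p.2) * p.2 j) ^ 2) (μ.prod ν) := by
    intro j
    refine hu2.mono' (Measurable.aestronglyMeasurable (by fun_prop)) (Filter.Eventually.of_forall fun p => ?_)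
    rw [Real.norm_of_nonneg (sq_nonneg _), mul_pow]
    refine mul_le_mul_of_nonneg_left ?_ (sq_nonneg _)
    have := Finset.single_le_sum (f := fun j => p.2 j ^ 2) (fun j _ => sq_nonneg _)
      (Finset.mem_univ j)
    linarith
  have hc : MemLp (contVal d s u) 2 μ := memLp_marginal μ ν _ mu I0
  have hz : ∀ j, MemLp (fun w => zEst d s u w j) 2 μ := fun j =>
    (memLp_marginal μ ν (fun p => u (p.1 + p.2) * p.2 j) (by fun_prop) (Ij j)).const_mul (1 / s)
  have hp : MemLp ψ 2 μ := gaussPi_memLp_poly d t ψ hψ.continuous.measurable hψ_growth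
  have hb : ∀ j, MemLp (pd d ψ j) 2 μ := by
    intro j
    obtain ⟨C, n, h⟩ := hgradψ_growth
    refine gaussPi_memLp_poly d t _ (pd_measurable d ψ hψ j) ⟨C, n, fun x => le_trans ?_ (h x)⟩
    refine Real.abs_le_sqrt ?_
    exact Finset.single_le_sum (f := fun j => pd d ψ j x ^ 2) (fun j _ => sq_nonneg _)
      (Finset.mem_univ j)
  have J1 : Integrable (fun w => (contVal d s u w - ψ w) ^ 2) μ := (hc.sub hp).integrable_sq
  have J2 : Integrable (fun w => ∑ j, (zEst d s u w j - pd d ψ j w) ^ 2) μ :=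
    integrable_finsetSum _ fun j _ => ((hz j).sub (hb j)).integrable_sq
  have J3 : Integrable (fun w => ∑ j, (zEst d s u w j) ^ 2) μ :=
    integrable_finsetSum _ fun j _ => (hz j).integrable_sq
  have aeL : ∀ᵐ w ∂μ, MemLp (fun z => u (w + z)) 2 ν := by
    filter_upwards [I0.prod_right_ae] with w hw
    exact (memLp_two_iff_integrable_sq
      (mu.comp measurable_prodMk_left).aestronglyMeasurable).2 hw
  have V : ∀ᵐ w ∂μ, ∫ z, (u (w + z) - contVal d s u w) ^ 2 ∂ν
      = ∫ z, u (w + z) ^ 2 ∂ν - contVal d s u w ^ 2 := by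
    filter_upwards [aeL] with w hw
    have := inner_decomp d s hs _ hw (contVal d s u w) 0 (contVal d s u w) (zEst d s u w) rfl
      (fun j => rfl)
    simp only [Pi.zero_apply, zero_mul, Finset.sum_const_zero, sub_zero] at this
    rw [this]
    simp
    ring
  have J4 : Integrable (fun w => ∫ z, (u (w + z) - contVal d s u w) ^ 2 ∂ν) μ :=
    (I0.integral_prod_left.sub hc.integrable_sq).congr (by
      filter_upwards [V] with w hw
      rw [hw]; rfl)
  have J5 := J1.fun_add (J2.const_mul s)
  have J6 : Integrable (fun w => (∫ z, (u (w + z) - contVal d s u w) ^ 2 ∂ν)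
      - s * ∑ j, (zEst d s u w j) ^ 2) μ := J4.sub (J3.const_mul s)
  rw [← integral_const_mul, ← integral_const_mul, ← integral_sub J4 (J3.const_mul s),
    ← integral_add J1 (J2.const_mul s), ← integral_add J5 J6]
  unfold gLoss
  refine integral_congr_ae ?_
  filter_upwards [aeL, V] with w hw hV
  rw [hV, inner_decomp d s hs _ hw (ψ w) (fun j => pd d ψ j w) (contVal d s u w) (zEst d s u w) rfl
      (fun j => rfl)]
  have e : ∑ j, (zEst d s u w j - pd d ψ j w) ^ 2 = ∑ j, zEst d s u w j ^ 2
      - 2 * ∑ j, pd d ψ j w * zEst d s u w j + ∑ j, pd d ψ j w ^ 2 := by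
    rw [Finset.mul_sum, ← Finset.sum_sub_distrib, ← Finset.sum_add_distrib]
    exact Finset.sum_congr rfl fun j _ => by ring
  rw [e]
  ring
end
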